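/- Let d ≥ 1 and ℓ ∈ ℤ_{≥0}^d. Let c ∈ ℝ, a = (a₁,…,a_d) ∈ 𝔻^d, and b = (b₁,…,b_d) ∈ ℝ^d satisfy |a_κ·(b_κ − |a_κ|² + 1)| + |b_κ| ≤ 1 − |a_κ|² for every κ, and define f(z) = c·∏_{j=1}^d (1 − z_j·conj(a_j))^{−(ℓ_j+2)} and g = (g₁,…,g_d) with g_κ(z) = a_κ + b_κ·z_κ/(1 − conj(a_κ)·z_κ). Then g maps 𝔻^d into 𝔻^d and there exists a constant R > 0 such that for every analytic function h : 𝔻^d → ℂ, ∫_{𝔻^d} |f(z)·h(g(z))|² ∏_{j=1}^d (1+ℓ_j)(1−|z_j|²)^{ℓ_j} dA(z₁)⋯dA(z_d) ≤ R·∫_{𝔻^d} |h(x)|² ∏_{j=1}^d (1+ℓ_j)(1−|x_j|²)^{ℓ_j} dA(x₁)⋯dA(x_d) (as an inequality in [0,∞]). -/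

import Mathlib

open MeasureTheory Complex ComplexConjugate

/-- The normalized area measure on `ℂ` (planar Lebesgue measure divided by `π`). -/
noncomputable def dA : Measure ℂ := (ENNReal.ofReal Real.pi)⁻¹ • volume

open Set Function Metric Real
open scoped ENNReal

/-!
Since `f` is bounded on the polydisk, only the composition with `g` matters, and as `g` acts on each
coordinate separately, Tonelli's theorem reduces it to one disk variable. There, the square of the
function is `‖u‖` for a holomorphic `u`, and Littlewood's subordination principle applies: on a
circle, `‖u‖` is the boundary value of the Poisson integral `Re H`, with `H` the Herglotz integral
of `‖u‖`, which dominates `‖u‖` inside. If `φ 0 = 0`, the mean value property of `H ∘ φ` bounds the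
circular means of `‖u ∘ φ‖` by those of `‖u‖`, and polar coordinates give the bound for every radial
weight. A disk automorphism moves `φ 0` to `0`; its Jacobian together with the change of the weight
costs only a factor `((1 + ‖φ 0‖) / (1 - ‖φ 0‖)) ^ (α + 2)`.
-/

section ProductMeasure

variable {ι : Type*} [Fintype ι] {X : ι → Type*} [∀ i, MeasurableSpace (X i)]
  {μ : ∀ i, Measure (X i)} [∀ i, SigmaFinite (μ i)]

lemma lintegral_pi_prod {f : ∀ i, X i → ℝ≥0∞} (hf : ∀ i, Measurable (f i)) :
    ∫⁻ x, ∏ i, f i (x i) ∂Measure.pi μ = ∏ i, ∫⁻ t, f i t ∂μ i := by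
  classical
  suffices ∀ s : Finset ι, ∀ x, (∫⋯∫⁻_s, (fun x ↦ ∏ i ∈ s, f i (x i)) ∂μ) x =
      ∏ i ∈ s, ∫⁻ t, f i t ∂μ i by
    obtain hX | ⟨⟨x⟩⟩ := isEmpty_or_nonempty (∀ i, X i)
    · obtain ⟨i, hi⟩ := isEmpty_pi.1 hX
      simp [lintegral_of_isEmpty, Finset.prod_eq_zero (Finset.mem_univ i)]
    · rw [lintegral_eq_lmarginal_univ x, this]
  intro s
  induction s using Finset.induction_on with
  | empty => simp
  | insert i s hi ih =>
    intro x
    have hupdate (x : ∀ i, X i) (t : X i) :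
        ∏ j ∈ insert i s, f j (update x i t j) = f i t * ∏ j ∈ s, f j (x j) := by
      rw [Finset.prod_insert hi, update_self]
      congr 1
      exact Finset.prod_congr rfl fun j hj ↦ by rw [update_of_ne (ne_of_mem_of_not_mem hj hi)]
    have hmeas (s : Finset ι) : Measurable fun x : ∀ i, X i ↦ ∏ i ∈ s, f i (x i) := by fun_prop
    calc (∫⋯∫⁻_insert i s, (fun x ↦ ∏ j ∈ insert i s, f j (x j)) ∂μ) x
      _ = (∫⋯∫⁻_s, (fun x ↦ (∫⁻ t, f i t ∂μ i) * ∏ j ∈ s, f j (x j)) ∂μ) x := by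
        simp only [lmarginal_insert' _ (hmeas _) hi, hupdate, lintegral_mul_const _ (hf i)]
      _ = (∫⁻ t, f i t ∂μ i) * (∫⋯∫⁻_s, (fun x ↦ ∏ j ∈ s, f j (x j)) ∂μ) x :=
        lintegral_const_mul _ ((hmeas s).comp measurable_updateFinset)
      _ = ∏ j ∈ insert i s, ∫⁻ t, f j t ∂μ j := by rw [ih x, Finset.prod_insert hi]

theorem pi_withDensity {f : ∀ i, X i → ℝ≥0∞} (hf : ∀ i, Measurable (f i))
    [∀ i, SigmaFinite ((μ i).withDensity (f i))] :
    Measure.pi (fun i ↦ (μ i).withDensity (f i)) =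
      (Measure.pi μ).withDensity fun x ↦ ∏ i, f i (x i) := by
  refine Measure.pi_eq fun s hs ↦ ?_
  have hind : (univ.pi s).indicator (fun x ↦ ∏ i, f i (x i)) =
      fun x ↦ ∏ i, (s i).indicator (f i) (x i) := by
    ext x
    by_cases hx : ∀ i, x i ∈ s i
    · simp [hx]
    · obtain ⟨i, hi⟩ := not_forall.1 hx
      rw [indicator_of_notMem (by simpa using ⟨i, hi⟩),
        Finset.prod_eq_zero (Finset.mem_univ i) (indicator_of_notMem hi _)]
  rw [withDensity_apply _ (.univ_pi hs), ← lintegral_indicator (.univ_pi hs), hind,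
    lintegral_pi_prod fun i ↦ (hf i).indicator (hs i)]
  exact Finset.prod_congr rfl fun i _ ↦ by
    rw [lintegral_indicator (hs i), withDensity_apply _ (hs i)]

end ProductMeasure

section Tensorization

lemma measurable_indicator_of_isOpen {X Y : Type*} [TopologicalSpace X]
    [MeasurableSpace X] [BorelSpace X] [TopologicalSpace Y] [MeasurableSpace Y]
    [BorelSpace Y] [Zero Y] {s : Set X} (hs : IsOpen s) {F : X → Y} (hF : ContinuousOn F s) :
    Measurable (s.indicator F) := by
  classical
  rw [← piecewise_eq_indicator]
  exact hF.measurable_piecewise continuousOn_const hs.measurableSet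

lemma lintegral_pi_le_of_lintegral_update_le {ι : Type*} [Fintype ι] [DecidableEq ι]
    {X : ι → Type*} [∀ i, MeasurableSpace (X i)] {μ : ∀ i, Measure (X i)}
    [∀ i, SigmaFinite (μ i)] {F G : (∀ i, X i) → ℝ≥0∞} {C : ℝ≥0∞} (i : ι)
    (hF : Measurable F) (hG : Measurable G)
    (h : ∀ x, ∫⁻ t, F (update x i t) ∂μ i ≤ C * ∫⁻ t, G (update x i t) ∂μ i) :
    ∫⁻ x, F x ∂Measure.pi μ ≤ C * ∫⁻ x, G x ∂Measure.pi μ := by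
  rw [← lintegral_const_mul C hG]
  refine lintegral_le_of_lmarginal_le {i} hF (hG.const_mul C) fun x ↦ ?_
  simp only [lmarginal_singleton]
  exact (h x).trans_eq (lintegral_const_mul C (hG.comp (measurable_update x))).symm

lemma differentiableOn_update_comp {ι : Type*} [Finite ι] [DecidableEq ι] {U : ι → Set ℂ} (i : ι)
    {f : ℂ → ℂ} (hf : DifferentiableOn ℂ f (U i)) :
    DifferentiableOn ℂ (fun z : ι → ℂ ↦ update z i (f (z i))) (univ.pi U) := by
  have := Fintype.ofFinite ι
  rw [differentiableOn_pi]
  intro j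
  obtain rfl | hji := eq_or_ne j i
  · simp only [update_self]
    exact hf.comp (by fun_prop) fun (z : ι → ℂ) (hz : z ∈ univ.pi U) ↦ hz j trivial
  · simp only [update_of_ne hji]
    fun_prop

variable {ι : Type*} [Fintype ι] {E : Type*} [NormedAddCommGroup E] [NormedSpace ℂ E]
  {U : ι → Set ℂ} {μ : ι → Measure ℂ} [∀ i, SigmaFinite (μ i)] {Φ : E → ℝ≥0∞}

lemma lintegral_comp_update_le [DecidableEq ι] (hΦ : Continuous Φ) (hU : ∀ i, IsOpen (U i))
    (i : ι) {f : ℂ → ℂ} {C : ℝ≥0∞} (hf : DifferentiableOn ℂ f (U i)) (hfU : MapsTo f (U i) (U i))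
    (hC : ∀ u : ℂ → E, DifferentiableOn ℂ u (U i) →
      ∫⁻ t in U i, Φ (u (f t)) ∂μ i ≤ C * ∫⁻ t in U i, Φ (u t) ∂μ i)
    {h : (ι → ℂ) → E} (hh : DifferentiableOn ℂ h (univ.pi U)) :
    ∫⁻ z in univ.pi U, Φ (h (update z i (f (z i)))) ∂Measure.pi μ ≤
      C * ∫⁻ z in univ.pi U, Φ (h z) ∂Measure.pi μ := by
  have hopen : IsOpen (univ.pi U) := isOpen_set_pi finite_univ fun i _ ↦ hU i
  have hmaps : MapsTo (fun z : ι → ℂ ↦ update z i (f (z i))) (univ.pi U) (univ.pi U) :=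
    fun z hz ↦ (update_mem_pi_iff_of_mem hz).2 fun _ ↦ hfU (hz i trivial)
  have hmeas {k : (ι → ℂ) → E} (hk : DifferentiableOn ℂ k (univ.pi U)) :
      Measurable ((univ.pi U).indicator fun z ↦ Φ (k z)) :=
    measurable_indicator_of_isOpen hopen (hΦ.comp_continuousOn hk.continuousOn)
  rw [← lintegral_indicator hopen.measurableSet, ← lintegral_indicator hopen.measurableSet]
  refine lintegral_pi_le_of_lintegral_update_le i
    (hmeas (hh.comp (differentiableOn_update_comp i hf) hmaps)) (hmeas hh) fun x ↦ ?_
  by_cases hx : ∀ j ≠ i, x j ∈ U j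
  · have hslice : DifferentiableOn ℂ (h ∘ update x i) (U i) :=
      hh.comp (fun t _ ↦ (hasDerivAt_update x i t).differentiableAt.differentiableWithinAt)
        (update_preimage_univ_pi hx).ge
    have hind (k : (ι → ℂ) → ℝ≥0∞) (t : ℂ) : (univ.pi U).indicator k (update x i t) =
        (U i).indicator (fun t ↦ k (update x i t)) t := by
      rw [← update_preimage_univ_pi hx]
      rfl
    simpa only [hind, comp_apply, update_self, update_idem,
      lintegral_indicator (hU i).measurableSet] using hC _ hslice
  · have hout : ∀ t, update x i t ∉ univ.pi U := fun t ht ↦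
      hx fun j hj ↦ by simpa [hj] using ht j trivial
    simp [hout]

theorem lintegral_comp_pi_le {φ : ι → ℂ → ℂ} {C : ι → ℝ≥0∞} (hΦ : Continuous Φ)
    (hU : ∀ i, IsOpen (U i)) (hφ : ∀ i, DifferentiableOn ℂ (φ i) (U i))
    (hφU : ∀ i, MapsTo (φ i) (U i) (U i))
    (hC : ∀ i, ∀ u : ℂ → E, DifferentiableOn ℂ u (U i) →
      ∫⁻ t in U i, Φ (u (φ i t)) ∂μ i ≤ C i * ∫⁻ t in U i, Φ (u t) ∂μ i)
    {h : (ι → ℂ) → E} (hh : DifferentiableOn ℂ h (univ.pi U)) :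
    ∫⁻ z in univ.pi U, Φ (h fun i ↦ φ i (z i)) ∂Measure.pi μ ≤
      (∏ i, C i) * ∫⁻ z in univ.pi U, Φ (h z) ∂Measure.pi μ := by
  classical
  suffices ∀ s : Finset ι, ∀ k : (ι → ℂ) → E, DifferentiableOn ℂ k (univ.pi U) →
      ∫⁻ z in univ.pi U, Φ (k (s.piecewise (fun i ↦ φ i (z i)) z)) ∂Measure.pi μ ≤
        (∏ i ∈ s, C i) * ∫⁻ z in univ.pi U, Φ (k z) ∂Measure.pi μ by
    simpa using this Finset.univ h hh
  intro s
  induction s using Finset.induction_on with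
  | empty => simp
  | insert i s hi ih =>
    intro k hk
    have hmaps : MapsTo (fun z : ι → ℂ ↦ update z i (φ i (z i))) (univ.pi U) (univ.pi U) :=
      fun z hz ↦ (update_mem_pi_iff_of_mem hz).2 fun _ ↦ hφU i (hz i trivial)
    calc ∫⁻ z in univ.pi U, Φ (k ((insert i s).piecewise (fun i ↦ φ i (z i)) z)) ∂Measure.pi μ
      _ ≤ (∏ j ∈ s, C j) * ∫⁻ z in univ.pi U, Φ (k (update z i (φ i (z i)))) ∂Measure.pi μ := by
        simpa [Finset.piecewise_insert, hi]
          using ih _ (hk.comp (differentiableOn_update_comp i (hφ i)) hmaps)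
      _ ≤ (∏ j ∈ s, C j) * (C i * ∫⁻ z in univ.pi U, Φ (k z) ∂Measure.pi μ) := by
        gcongr
        exact lintegral_comp_update_le hΦ hU i (hφ i) (hφU i) (hC i) hk
      _ = (∏ j ∈ insert i s, C j) * ∫⁻ z in univ.pi U, Φ (k z) ∂Measure.pi μ := by
        rw [Finset.prod_insert hi]; ring

end Tensorization

section Subordination

variable {E : Type*} [NormedAddCommGroup E] [NormedSpace ℂ E]

lemma norm_circleAverage_le (f : ℂ → E) (c : ℂ) (R : ℝ) :
    ‖circleAverage f c R‖ ≤ circleAverage (fun z ↦ ‖f z‖) c R := by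
  rw [circleAverage_def, circleAverage_def, norm_smul, norm_inv,
    norm_of_nonneg two_pi_pos.le, smul_eq_mul]
  gcongr
  exact intervalIntegral.norm_integral_le_integral_norm two_pi_pos.le

lemma poissonKernel_nonneg {c w z : ℂ} {R : ℝ} (hw : w ∈ ball c R) (hz : z ∈ sphere c R) :
    0 ≤ poissonKernel c w z := by
  rw [mem_ball_iff_norm] at hw
  rw [mem_sphere_iff_norm] at hz
  rw [poissonKernel_def, hz]
  have : ‖w - c‖ ^ 2 ≤ R ^ 2 := by gcongr
  exact div_nonneg (sub_nonneg.2 this) (sq_nonneg _)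

lemma norm_le_circleAverage_poissonKernel_smul_norm [CompleteSpace E] {u : ℂ → E} {c w : ℂ}
    {R : ℝ} (hu : DiffContOnCl ℂ u (ball c R)) (hw : w ∈ ball c R) :
    ‖u w‖ ≤ circleAverage (poissonKernel c w • fun z ↦ ‖u z‖) c R := by
  have hR : 0 < R := pos_of_mem_ball hw
  calc ‖u w‖
    _ = ‖circleAverage (poissonKernel c w • u) c R‖ := by
      rw [hu.circleAverage_poissonKernel_smul hw]
    _ ≤ circleAverage (fun z ↦ ‖(poissonKernel c w • u) z‖) c R := norm_circleAverage_le _ _ _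
    _ = circleAverage (poissonKernel c w • fun z ↦ ‖u z‖) c R := by
      refine circleAverage_congr_sphere fun z hz ↦ ?_
      rw [abs_of_pos hR] at hz
      simp [norm_smul, abs_of_nonneg (poissonKernel_nonneg hw hz)]

lemma exists_norm_le_re_and_re_zero_eq_circleAverage [CompleteSpace E] {u : ℂ → E} {s : ℝ}
    (hs : 0 < s) (hu : DiffContOnCl ℂ u (ball 0 s)) :
    ∃ H : ℂ → ℂ, DifferentiableOn ℂ H (ball 0 s) ∧ (∀ w ∈ ball 0 s, ‖u w‖ ≤ (H w).re) ∧
      (H 0).re = circleAverage (fun z ↦ ‖u z‖) 0 s := by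
  have hcont : ContinuousOn (fun z ↦ ‖u z‖) (sphere 0 s) :=
    hu.continuousOn_ball.norm.mono sphere_subset_closedBall
  have hre {w : ℂ} (hw : w ∈ ball 0 s) :
      (circleAverage (fun ζ ↦ herglotzRieszKernel 0 w ζ • (‖u ζ‖ : ℂ)) 0 s).re =
        circleAverage (poissonKernel 0 w • fun z ↦ ‖u z‖) 0 s := by
    rw [poissonKernel_eq_re_herglotzRieszKernel,
      re_circleAverage_herglotzRieszKernel_smul (hcont.circleIntegrable hs.le) hw]
  refine ⟨fun w ↦ circleAverage (fun ζ ↦ herglotzRieszKernel 0 w ζ • (‖u ζ‖ : ℂ)) 0 s,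
    differentiableOn_circleAverage_herglotzRieszKernel_smul
      ((continuous_ofReal.comp_continuousOn hcont).circleIntegrable hs.le),
    fun w hw ↦ (hre hw).symm ▸ norm_le_circleAverage_poissonKernel_smul_norm hu hw,
    (hre (mem_ball_self hs)).trans (circleAverage_congr_sphere fun z hz ↦ ?_)⟩
  have hz0 : ‖z‖ ≠ 0 := by
    rw [mem_sphere_zero_iff_norm.1 hz]
    exact (abs_pos.2 hs.ne').ne'
  simp [poissonKernel_def, hz0]

lemma circleAverage_norm_comp_le_of_mapsTo_ball [CompleteSpace E] {u : ℂ → E} {φ : ℂ → ℂ}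
    {r s : ℝ} (hr : 0 < r) (hu : DiffContOnCl ℂ u (ball 0 s)) (hφ : DiffContOnCl ℂ φ (ball 0 r))
    (hmaps : MapsTo φ (closedBall 0 r) (ball 0 s)) (h0 : φ 0 = 0) :
    circleAverage (fun z ↦ ‖u (φ z)‖) 0 r ≤ circleAverage (fun z ↦ ‖u z‖) 0 s := by
  have hs : 0 < s := pos_of_mem_ball (hmaps (mem_closedBall_self hr.le))
  obtain ⟨H, hH, hle, hH0⟩ := exists_norm_le_re_and_re_zero_eq_circleAverage hs hu
  have hφs : MapsTo φ (sphere 0 r) (ball 0 s) := hmaps.mono_left sphere_subset_closedBall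
  have hφc : ContinuousOn φ (sphere 0 r) := hφ.continuousOn_ball.mono sphere_subset_closedBall
  have hHφ : DiffContOnCl ℂ (H ∘ φ) (ball 0 r) :=
    ⟨hH.comp hφ.differentiableOn (hmaps.mono_left ball_subset_closedBall), by
      rw [closure_ball 0 hr.ne']
      exact hH.continuousOn.comp hφ.continuousOn_ball hmaps⟩
  have hHφi : CircleIntegrable (H ∘ φ) 0 r :=
    (hH.continuousOn.comp hφc hφs).circleIntegrable hr.le
  calc circleAverage (fun z ↦ ‖u (φ z)‖) 0 r
    _ ≤ circleAverage (reCLM ∘ H ∘ φ) 0 r := by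
      refine circleAverage_mono ?_ ?_ fun z hz ↦ ?_
      · exact (hu.differentiableOn.continuousOn.comp hφc hφs).norm.circleIntegrable hr.le
      · exact (reCLM.continuous.comp_continuousOn
          (hH.continuousOn.comp hφc hφs)).circleIntegrable hr.le
      · exact hle _ (hφs (abs_of_pos hr ▸ hz))
    _ = (H (φ 0)).re := by
      rw [reCLM.circleAverage_comp_comm hHφi, DiffContOnCl.circleAverage (by rwa [abs_of_pos hr])]
      rfl
    _ = circleAverage (fun z ↦ ‖u z‖) 0 s := by rw [h0, hH0]

/-- **Littlewood's subordination principle**. -/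
theorem circleAverage_norm_comp_le [CompleteSpace E] {u : ℂ → E} {φ : ℂ → ℂ} {r R : ℝ}
    (hu : DifferentiableOn ℂ u (ball 0 R)) (hφ : DifferentiableOn ℂ φ (ball 0 R))
    (hmaps : MapsTo φ (ball 0 R) (ball 0 R)) (h0 : φ 0 = 0) (hr : 0 < r) (hrR : r < R) :
    circleAverage (fun z ↦ ‖u (φ z)‖) 0 r ≤ circleAverage (fun z ↦ ‖u z‖) 0 r := by
  have hlarger : ∀ s ∈ Ioo r R,
      circleAverage (fun z ↦ ‖u (φ z)‖) 0 r ≤ circleAverage (fun z ↦ ‖u z‖) 0 s := by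
    rintro s ⟨hrs, hsR⟩
    refine circleAverage_norm_comp_le_of_mapsTo_ball hr
      (hu.diffContOnCl_ball (closedBall_subset_ball hsR))
      (hφ.diffContOnCl_ball (closedBall_subset_ball hrR)) (fun z hz ↦ ?_) h0
    rw [mem_closedBall_zero_iff] at hz
    rw [mem_ball_zero_iff]
    exact ((norm_le_norm_of_mapsTo_ball hφ (hmaps.mono_right ball_subset_closedBall) h0
      (hz.trans_lt hrR)).trans hz).trans_lt hrs
  have hcont : ContinuousOn (circleAverage (fun z ↦ ‖u z‖) 0) (Ico 0 R) := by
    refine ContinuousOn.circleAverage (hu.continuousOn.norm.mono fun z hz ↦ ?_) fun r hr ↦ hr.1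
    simpa using hz.2
  have := left_nhdsWithin_Ioo_neBot hrR
  exact ge_of_tendsto
    ((hcont r ⟨hr.le, hrR⟩).mono (Ioo_subset_Ico_self.trans (Ico_subset_Ico_left hr.le)))
    (eventually_mem_nhdsWithin.mono hlarger)

end Subordination

section Polar

lemma lintegral_eq_lintegral_circleMap {F : ℂ → ℝ≥0∞} (hF : Measurable F) :
    ∫⁻ z, F z =
      ∫⁻ r in Ioi (0 : ℝ), ENNReal.ofReal r * ∫⁻ θ in Ioo (-π) π, F (circleMap 0 r θ) := by
  have hcircle (p : ℝ × ℝ) : Complex.polarCoord.symm p = circleMap 0 p.1 p.2 := by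
    rw [Complex.polarCoord_symm_apply, circleMap_zero, exp_mul_I, ofReal_cos, ofReal_sin]
  rw [← Complex.lintegral_comp_polarCoord_symm, polarCoord_target, Measure.volume_eq_prod,
    ← Measure.prod_restrict]
  simp only [hcircle, smul_eq_mul]
  rw [lintegral_prod _ (by fun_prop)]
  exact lintegral_congr fun r ↦ lintegral_const_mul' _ _ ENNReal.ofReal_ne_top

lemma lintegral_enorm_circleMap {E : Type*} [NormedAddCommGroup E] {f : ℂ → E} {r : ℝ}
    (hr : 0 ≤ r) (hf : ContinuousOn f (sphere 0 r)) :
    ∫⁻ θ in Ioo (-π) π, ‖f (circleMap 0 r θ)‖ₑ =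
      ENNReal.ofReal (2 * π * circleAverage (fun z ↦ ‖f z‖) 0 r) := by
  have hcont : Continuous fun θ ↦ ‖f (circleMap 0 r θ)‖ :=
    (hf.comp_continuous (continuous_circleMap 0 r) (circleMap_mem_sphere 0 hr)).norm
  rw [circleAverage_eq_integral_add (-π), smul_eq_mul, mul_inv_cancel_left₀ two_pi_pos.ne',
    intervalIntegral.integral_comp_add_right fun θ ↦ ‖f (circleMap 0 r θ)‖,
    intervalIntegral.integral_of_le (by linarith [pi_pos]), show 2 * π + -π = π by ring, zero_add,
    ofReal_integral_eq_lintegral_ofReal hcont.integrableOn_Ioc (ae_of_all _ fun _ ↦ norm_nonneg _),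
    restrict_Ioo_eq_restrict_Ioc]
  simp only [ofReal_norm]

lemma setLIntegral_ball_enorm_mul {E : Type*} [NormedAddCommGroup E] {f : ℂ → E} {R : ℝ}
    (hf : ContinuousOn f (ball 0 R)) {w : ℝ → ℝ≥0∞} (hw : Measurable w) :
    ∫⁻ z in ball 0 R, ‖f z‖ₑ * w ‖z‖ = ∫⁻ r in Ioo 0 R,
      ENNReal.ofReal r * (ENNReal.ofReal (2 * π * circleAverage (fun z ↦ ‖f z‖) 0 r) * w r) := by
  have hmeas : Measurable ((ball 0 R).indicator fun z ↦ ‖f z‖ₑ * w ‖z‖) := by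
    convert (measurable_indicator_of_isOpen isOpen_ball hf.enorm).mul (hw.comp measurable_norm)
    ext z
    exact indicator_mul_left (ball 0 R) (fun z ↦ ‖f z‖ₑ) fun z ↦ w ‖z‖
  rw [← lintegral_indicator measurableSet_ball, lintegral_eq_lintegral_circleMap hmeas,
    ← Iio_inter_Ioi (b := 0), ← setLIntegral_indicator measurableSet_Iio]
  refine setLIntegral_congr_fun measurableSet_Ioi fun r (hr : 0 < r) ↦ ?_
  by_cases hrR : r < R
  · have hsphere : sphere (0 : ℂ) r ⊆ ball 0 R := sphere_subset_ball hrR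
    have hmem (θ : ℝ) : circleMap 0 r θ ∈ ball 0 R := hsphere (circleMap_mem_sphere 0 hr.le θ)
    have hθ : Measurable fun θ ↦ ‖f (circleMap 0 r θ)‖ₑ :=
      ((hf.mono hsphere).comp_continuous (continuous_circleMap 0 r)
        (circleMap_mem_sphere 0 hr.le)).enorm.measurable
    simp only [hmem, indicator_of_mem, mem_Iio, hrR, norm_circleMap_zero, abs_of_pos hr,
      lintegral_mul_const _ hθ, lintegral_enorm_circleMap hr.le (hf.mono hsphere)]
  · simp [hrR, abs_of_pos hr]

end Polar

lemma setLIntegral_ball_enorm_comp_mul_le {E : Type*} [NormedAddCommGroup E] [NormedSpace ℂ E]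
    [CompleteSpace E] {u : ℂ → E} {φ : ℂ → ℂ} {R : ℝ} (hu : DifferentiableOn ℂ u (ball 0 R))
    (hφ : DifferentiableOn ℂ φ (ball 0 R)) (hmaps : MapsTo φ (ball 0 R) (ball 0 R)) (h0 : φ 0 = 0)
    {w : ℝ → ℝ≥0∞} (hw : Measurable w) :
    ∫⁻ z in ball 0 R, ‖u (φ z)‖ₑ * w ‖z‖ ≤ ∫⁻ z in ball 0 R, ‖u z‖ₑ * w ‖z‖ := by
  have huφ : ContinuousOn (fun z ↦ u (φ z)) (ball 0 R) := (hu.comp hφ hmaps).continuousOn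
  rw [setLIntegral_ball_enorm_mul hu.continuousOn hw, setLIntegral_ball_enorm_mul huφ hw]
  refine setLIntegral_mono' measurableSet_Ioo fun r hr ↦ ?_
  gcongr ENNReal.ofReal r * (ENNReal.ofReal (2 * π * ?_) * w r)
  exact circleAverage_norm_comp_le hu hφ hmaps h0 hr.1 hr.2

/-- The automorphism `z ↦ (z + p) / (1 + conj p * z)` of the unit disk, for `‖p‖ < 1`, which sends
`0` to `p`. -/
noncomputable def diskShift (p z : ℂ) : ℂ := (z + p) / (1 + conj p * z)

section DiskShift

variable {p z : ℂ}

lemma one_add_conj_mul_ne_zero (hp : ‖p‖ < 1) (hz : ‖z‖ < 1) : 1 + conj p * z ≠ 0 := by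
  intro h
  have : ‖conj p * z‖ = 1 := by rw [← norm_neg, ← eq_neg_of_add_eq_zero_left h, norm_one]
  rw [norm_mul, RCLike.norm_conj] at this
  exact (mul_lt_one_of_nonneg_of_lt_one_left (norm_nonneg p) hp hz.le).ne this

lemma one_sub_conj_mul_ne_zero (hp : ‖p‖ < 1) (hz : ‖z‖ < 1) : 1 - conj p * z ≠ 0 := by
  simpa [sub_eq_add_neg] using one_add_conj_mul_ne_zero (p := -p) (by rwa [norm_neg]) hz

lemma one_sub_norm_sq_pos (hz : ‖z‖ < 1) : 0 < 1 - ‖z‖ ^ 2 :=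
  sub_pos.2 (pow_lt_one₀ (norm_nonneg z) hz two_ne_zero)

lemma norm_one_sub_norm_sq (hz : ‖z‖ < 1) : ‖(1 - ‖z‖ ^ 2 : ℂ)‖ = 1 - ‖z‖ ^ 2 := by
  rw [← norm_of_nonneg (one_sub_norm_sq_pos hz).le, ← norm_real]
  push_cast
  rfl

lemma one_sub_norm_diskShift_sq (hp : ‖p‖ < 1) (hz : ‖z‖ < 1) :
    1 - ‖diskShift p z‖ ^ 2 = (1 - ‖p‖ ^ 2) * (1 - ‖z‖ ^ 2) / ‖1 + conj p * z‖ ^ 2 := by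
  have hne : ‖1 + conj p * z‖ ≠ 0 := norm_ne_zero_iff.2 (one_add_conj_mul_ne_zero hp hz)
  rw [diskShift, norm_div, div_pow, eq_div_iff (pow_ne_zero 2 hne), sub_mul,
    div_mul_cancel₀ _ (pow_ne_zero 2 hne)]
  simp only [← normSq_eq_norm_sq, normSq_apply, add_re, add_im, mul_re, mul_im, conj_re, conj_im,
    one_re, one_im]
  ring

lemma norm_diskShift_lt_one (hp : ‖p‖ < 1) (hz : ‖z‖ < 1) : ‖diskShift p z‖ < 1 := by
  have h : 0 < 1 - ‖diskShift p z‖ ^ 2 := by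
    have := norm_pos_iff.2 (one_add_conj_mul_ne_zero hp hz)
    have := one_sub_norm_sq_pos hp
    have := one_sub_norm_sq_pos hz
    rw [one_sub_norm_diskShift_sq hp hz]
    positivity
  exact (sq_lt_one_iff₀ (norm_nonneg _)).1 (sub_pos.1 h)

lemma mapsTo_diskShift_ball (hp : ‖p‖ < 1) : MapsTo (diskShift p) (ball 0 1) (ball 0 1) := by
  intro z hz
  rw [mem_ball_zero_iff] at hz ⊢
  exact norm_diskShift_lt_one hp hz

lemma diskShift_neg_diskShift (hp : ‖p‖ < 1) (hz : ‖z‖ < 1) :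
    diskShift (-p) (diskShift p z) = z := by
  have hz' := one_add_conj_mul_ne_zero hp hz
  have hpp := one_sub_conj_mul_ne_zero hp hp
  have hnum : (z + p) / (1 + conj p * z) + -p = z * (1 - conj p * p) / (1 + conj p * z) := by
    rw [div_add' _ _ _ hz']
    ring
  have hden : 1 + -conj p * ((z + p) / (1 + conj p * z)) =
      (1 - conj p * p) / (1 + conj p * z) := by
    field_simp
    ring
  rw [diskShift, diskShift, map_neg, hnum, hden, div_div_div_cancel_right₀ hz',
    mul_div_cancel_right₀ _ hpp]

lemma invOn_diskShift_neg (hp : ‖p‖ < 1) :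
    InvOn (diskShift (-p)) (diskShift p) (ball 0 1) (ball 0 1) := by
  refine ⟨fun z hz ↦ diskShift_neg_diskShift hp (mem_ball_zero_iff.1 hz), fun z hz ↦ ?_⟩
  simpa using diskShift_neg_diskShift (p := -p) (by rwa [norm_neg]) (mem_ball_zero_iff.1 hz)

lemma bijOn_diskShift_ball (hp : ‖p‖ < 1) : BijOn (diskShift p) (ball 0 1) (ball 0 1) :=
  (invOn_diskShift_neg hp).bijOn (mapsTo_diskShift_ball hp)
    (mapsTo_diskShift_ball (by rwa [norm_neg]))

lemma hasDerivAt_diskShift (hp : ‖p‖ < 1) (hz : ‖z‖ < 1) :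
    HasDerivAt (diskShift p) ((1 - ‖p‖ ^ 2) / (1 + conj p * z) ^ 2) z := by
  have hnum : HasDerivAt (fun z ↦ z + p) 1 z := (hasDerivAt_id' z).add_const p
  have hden : HasDerivAt (fun z ↦ 1 + conj p * z) (conj p) z := by
    simpa using ((hasDerivAt_id' z).const_mul (conj p)).const_add 1
  refine (hnum.fun_div hden (one_add_conj_mul_ne_zero hp hz)).congr_deriv ?_
  rw [← conj_mul']
  ring

lemma differentiableOn_diskShift (hp : ‖p‖ < 1) : DifferentiableOn ℂ (diskShift p) (ball 0 1) :=
  fun _ hz ↦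
    (hasDerivAt_diskShift hp (mem_ball_zero_iff.1 hz)).differentiableAt.differentiableWithinAt

end DiskShift

lemma lintegral_image_eq_lintegral_enorm_deriv_sq_mul {s : Set ℂ} (hs : MeasurableSet s)
    {τ τ' : ℂ → ℂ} (hτ : ∀ z ∈ s, HasDerivAt τ (τ' z) z) (hinj : InjOn τ s) (F : ℂ → ℝ≥0∞) :
    ∫⁻ z in τ '' s, F z = ∫⁻ z in s, ‖τ' z‖ₑ ^ 2 * F (τ z) := by
  rw [lintegral_image_eq_lintegral_abs_det_fderiv_mul volume hs
    (fun z hz ↦ ((hτ z hz).hasFDerivAt.restrictScalars ℝ).hasFDerivWithinAt) hinj]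
  refine setLIntegral_congr_fun hs fun z _ ↦ ?_
  simp [ContinuousLinearMap.det, LinearMap.det_restrictScalars, Algebra.norm_complex_apply,
    normSq_eq_norm_sq, ENNReal.ofReal_pow]

section DiskShiftWeight

variable {p z : ℂ}

lemma norm_deriv_diskShift_sq_mul_rpow (hp : ‖p‖ < 1) (hz : ‖z‖ < 1) (α : ℝ) :
    ‖(1 - ‖p‖ ^ 2 : ℂ) / (1 + conj p * z) ^ 2‖ ^ 2 * (1 - ‖diskShift p z‖ ^ 2) ^ α =
      ((1 - ‖p‖ ^ 2) / ‖1 + conj p * z‖ ^ 2) ^ (α + 2) * (1 - ‖z‖ ^ 2) ^ α := by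
  have hp' := one_sub_norm_sq_pos hp
  have hz' := one_sub_norm_sq_pos hz
  have hD : 0 < ‖1 + conj p * z‖ := norm_pos_iff.2 (one_add_conj_mul_ne_zero hp hz)
  rw [norm_div, norm_pow, norm_one_sub_norm_sq hp, one_sub_norm_diskShift_sq hp hz,
    mul_div_right_comm, mul_rpow (by positivity) hz'.le, rpow_add (by positivity), rpow_two]
  ring

lemma one_le_div_mul_div_norm_sq (hp : ‖p‖ < 1) (hz : ‖z‖ < 1) :
    1 ≤ (1 + ‖p‖) / (1 - ‖p‖) * ((1 - ‖p‖ ^ 2) / ‖1 + conj p * z‖ ^ 2) := by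
  have hp' : 0 < 1 - ‖p‖ := sub_pos.2 hp
  have hD : 0 < ‖1 + conj p * z‖ := norm_pos_iff.2 (one_add_conj_mul_ne_zero hp hz)
  have hle : ‖1 + conj p * z‖ ≤ 1 + ‖p‖ :=
    calc ‖1 + conj p * z‖
      _ ≤ 1 + ‖p‖ * ‖z‖ := by simpa using norm_add_le 1 (conj p * z)
      _ ≤ 1 + ‖p‖ := by gcongr; exact mul_le_of_le_one_right (norm_nonneg p) hz.le
  have heq : (1 + ‖p‖) / (1 - ‖p‖) * (1 - ‖p‖ ^ 2) = (1 + ‖p‖) ^ 2 := by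
    field_simp
    ring
  rw [← mul_div_assoc, heq, one_le_div (by positivity)]
  gcongr

lemma rpow_le_mul_norm_deriv_diskShift_sq_mul_rpow (hp : ‖p‖ < 1) (hz : ‖z‖ < 1) {α : ℝ}
    (hα : -2 ≤ α) :
    (1 - ‖z‖ ^ 2) ^ α ≤ ((1 + ‖p‖) / (1 - ‖p‖)) ^ (α + 2) *
      (‖(1 - ‖p‖ ^ 2 : ℂ) / (1 + conj p * z) ^ 2‖ ^ 2 * (1 - ‖diskShift p z‖ ^ 2) ^ α) := by
  have : 0 ≤ 1 - ‖p‖ := sub_nonneg.2 hp.le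
  have := one_sub_norm_sq_pos hp
  rw [norm_deriv_diskShift_sq_mul_rpow hp hz, ← mul_assoc,
    ← mul_rpow (by positivity) (by positivity)]
  exact le_mul_of_one_le_left (rpow_nonneg (one_sub_norm_sq_pos hz).le α)
    (one_le_rpow (one_le_div_mul_div_norm_sq hp hz) (by linarith))

lemma setLIntegral_ball_comp_diskShift_mul_rpow_le (hp : ‖p‖ < 1) {α : ℝ} (hα : -2 ≤ α)
    (F : ℂ → ℝ≥0∞) :
    ∫⁻ z in ball 0 1, F (diskShift p z) * ENNReal.ofReal ((1 - ‖z‖ ^ 2) ^ α) ≤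
      ENNReal.ofReal (((1 + ‖p‖) / (1 - ‖p‖)) ^ (α + 2)) *
        ∫⁻ z in ball 0 1, F z * ENNReal.ofReal ((1 - ‖z‖ ^ 2) ^ α) := by
  have : 0 ≤ 1 - ‖p‖ := sub_nonneg.2 hp.le
  nth_rw 2 [← (bijOn_diskShift_ball hp).image_eq]
  rw [lintegral_image_eq_lintegral_enorm_deriv_sq_mul measurableSet_ball
      (fun z hz ↦ hasDerivAt_diskShift hp (mem_ball_zero_iff.1 hz)) (bijOn_diskShift_ball hp).injOn,
    ← lintegral_const_mul' _ _ ENNReal.ofReal_ne_top]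
  refine setLIntegral_mono' measurableSet_ball fun z hz ↦ ?_
  calc F (diskShift p z) * ENNReal.ofReal ((1 - ‖z‖ ^ 2) ^ α)
    _ ≤ F (diskShift p z) * ENNReal.ofReal (((1 + ‖p‖) / (1 - ‖p‖)) ^ (α + 2) *
        (‖(1 - ‖p‖ ^ 2 : ℂ) / (1 + conj p * z) ^ 2‖ ^ 2 * (1 - ‖diskShift p z‖ ^ 2) ^ α)) := by
      gcongr
      exact rpow_le_mul_norm_deriv_diskShift_sq_mul_rpow hp (mem_ball_zero_iff.1 hz) hα
    _ = ENNReal.ofReal (((1 + ‖p‖) / (1 - ‖p‖)) ^ (α + 2)) *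
        (‖(1 - ‖p‖ ^ 2 : ℂ) / (1 + conj p * z) ^ 2‖ₑ ^ 2 *
          (F (diskShift p z) * ENNReal.ofReal ((1 - ‖diskShift p z‖ ^ 2) ^ α))) := by
      rw [ENNReal.ofReal_mul (by positivity), ENNReal.ofReal_mul (by positivity),
        ENNReal.ofReal_pow (norm_nonneg _), ofReal_norm]
      ring

theorem setLIntegral_ball_enorm_comp_mul_rpow_le {E : Type*} [NormedAddCommGroup E]
    [NormedSpace ℂ E] [CompleteSpace E] {u : ℂ → E} {φ : ℂ → ℂ} {α : ℝ} (hα : -2 ≤ α)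
    (hu : DifferentiableOn ℂ u (ball 0 1)) (hφ : DifferentiableOn ℂ φ (ball 0 1))
    (hmaps : MapsTo φ (ball 0 1) (ball 0 1)) :
    ∫⁻ z in ball 0 1, ‖u (φ z)‖ₑ * ENNReal.ofReal ((1 - ‖z‖ ^ 2) ^ α) ≤
      ENNReal.ofReal (((1 + ‖φ 0‖) / (1 - ‖φ 0‖)) ^ (α + 2)) *
        ∫⁻ z in ball 0 1, ‖u z‖ₑ * ENNReal.ofReal ((1 - ‖z‖ ^ 2) ^ α) := by
  set p := φ 0 with hp_def
  have hp : ‖p‖ < 1 := mem_ball_zero_iff.1 (hmaps (mem_ball_self one_pos))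
  have hnp : ‖-p‖ < 1 := by rwa [norm_neg]
  have hzero : diskShift (-p) (φ 0) = 0 := by simp [diskShift, ← hp_def]
  have hinv : ∀ z ∈ ball 0 1, diskShift p (diskShift (-p) (φ z)) = φ z := fun z hz ↦
    (invOn_diskShift_neg hp).2 (hmaps hz)
  calc ∫⁻ z in ball 0 1, ‖u (φ z)‖ₑ * ENNReal.ofReal ((1 - ‖z‖ ^ 2) ^ α)
    _ = ∫⁻ z in ball 0 1, ‖u (diskShift p (diskShift (-p) (φ z)))‖ₑ *
        ENNReal.ofReal ((1 - ‖z‖ ^ 2) ^ α) :=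
      setLIntegral_congr_fun measurableSet_ball fun z hz ↦ by simp only [hinv z hz]
    _ ≤ ∫⁻ z in ball 0 1, ‖u (diskShift p z)‖ₑ * ENNReal.ofReal ((1 - ‖z‖ ^ 2) ^ α) :=
      setLIntegral_ball_enorm_comp_mul_le
        (hu.comp (differentiableOn_diskShift hp) (mapsTo_diskShift_ball hp))
        ((differentiableOn_diskShift hnp).comp hφ hmaps)
        ((mapsTo_diskShift_ball hnp).comp hmaps) hzero
        (w := fun r ↦ ENNReal.ofReal ((1 - r ^ 2) ^ α)) (by fun_prop)
    _ ≤ _ := setLIntegral_ball_comp_diskShift_mul_rpow_le hp hα fun z ↦ ‖u z‖ₑ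

end DiskShiftWeight

section Bergman

instance : SigmaFinite dA := by
  have hπ : (ENNReal.ofReal π)⁻¹ ≠ ∞ := by simp [pi_pos]
  rw [dA, ← ENNReal.coe_toNNReal hπ]
  exact SMul.sigmaFinite _

/-- The standard weighted area measure `(1 + α) (1 - |z|²) ^ α dA(z)` of the Bergman space with
parameter `α`. It is meant to be integrated over the unit disk only, to which the definition does
not restrict it. -/
noncomputable def bergmanMeasure (α : ℝ) : Measure ℂ :=
  dA.withDensity fun z ↦ ENNReal.ofReal ((1 + α) * (1 - ‖z‖ ^ 2) ^ α)

instance (α : ℝ) : SigmaFinite (bergmanMeasure α) := SigmaFinite.withDensity_ofReal _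

lemma setLIntegral_ball_bergmanMeasure (α : ℝ) (F : ℂ → ℝ≥0∞) :
    ∫⁻ z in ball 0 1, F z ∂bergmanMeasure α = (ENNReal.ofReal π)⁻¹ * (ENNReal.ofReal (1 + α) *
      ∫⁻ z in ball 0 1, F z * ENNReal.ofReal ((1 - ‖z‖ ^ 2) ^ α)) := by
  rw [bergmanMeasure, setLIntegral_withDensity_eq_setLIntegral_mul_non_measurable _ (by fun_prop) _
      measurableSet_ball (ae_of_all _ fun _ ↦ ENNReal.ofReal_lt_top), dA, Measure.restrict_smul,
    lintegral_smul_measure, smul_eq_mul, ← lintegral_const_mul' _ _ ENNReal.ofReal_ne_top]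
  congr 1
  refine setLIntegral_congr_fun measurableSet_ball fun z hz ↦ ?_
  rw [Pi.mul_apply, ENNReal.ofReal_mul'
    (rpow_nonneg (one_sub_norm_sq_pos (mem_ball_zero_iff.1 hz)).le α)]
  ring

theorem setLIntegral_ball_enorm_comp_bergmanMeasure_le {E : Type*} [NormedAddCommGroup E]
    [NormedSpace ℂ E] [CompleteSpace E] {u : ℂ → E} {φ : ℂ → ℂ} {α : ℝ} (hα : -2 ≤ α)
    (hu : DifferentiableOn ℂ u (ball 0 1)) (hφ : DifferentiableOn ℂ φ (ball 0 1))
    (hmaps : MapsTo φ (ball 0 1) (ball 0 1)) :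
    ∫⁻ z in ball 0 1, ‖u (φ z)‖ₑ ∂bergmanMeasure α ≤
      ENNReal.ofReal (((1 + ‖φ 0‖) / (1 - ‖φ 0‖)) ^ (α + 2)) *
        ∫⁻ z in ball 0 1, ‖u z‖ₑ ∂bergmanMeasure α := by
  simp only [setLIntegral_ball_bergmanMeasure]
  calc _ ≤ (ENNReal.ofReal π)⁻¹ * (ENNReal.ofReal (1 + α) *
          (ENNReal.ofReal (((1 + ‖φ 0‖) / (1 - ‖φ 0‖)) ^ (α + 2)) *
            ∫⁻ z in ball 0 1, ‖u z‖ₑ * ENNReal.ofReal ((1 - ‖z‖ ^ 2) ^ α))) := by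
        gcongr
        exact setLIntegral_ball_enorm_comp_mul_rpow_le hα hu hφ hmaps
    _ = _ := by ring

variable {ι : Type*} [Fintype ι]

lemma setLIntegral_polydisk_bergmanMeasure {α : ι → ℝ} (hα : ∀ j, -1 ≤ α j)
    (F : (ι → ℂ) → ℝ≥0∞) :
    ∫⁻ z in univ.pi fun _ ↦ ball 0 1, F z ∂Measure.pi (fun j ↦ bergmanMeasure (α j)) =
      ∫⁻ z in univ.pi fun _ ↦ ball 0 1,
        F z * ENNReal.ofReal (∏ j, (1 + α j) * (1 - ‖z j‖ ^ 2) ^ α j)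
        ∂Measure.pi fun _ ↦ dA := by
  have hpolydisk : MeasurableSet (univ.pi fun _ : ι ↦ ball (0 : ℂ) 1) :=
    .univ_pi fun _ ↦ measurableSet_ball
  have hσ (j : ι) : SigmaFinite (dA.withDensity fun z ↦
    ENNReal.ofReal ((1 + α j) * (1 - ‖z‖ ^ 2) ^ α j)) := SigmaFinite.withDensity_ofReal _
  simp only [bergmanMeasure]
  rw [pi_withDensity fun _ ↦ by fun_prop,
    setLIntegral_withDensity_eq_setLIntegral_mul_non_measurable _ (by fun_prop) _ hpolydisk
      (ae_of_all _ fun _ ↦ ENNReal.prod_lt_top fun _ _ ↦ ENNReal.ofReal_lt_top)]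
  refine setLIntegral_congr_fun hpolydisk fun z hz ↦ ?_
  have hnonneg (j : ι) : 0 ≤ (1 + α j) * (1 - ‖z j‖ ^ 2) ^ α j :=
    mul_nonneg (by linarith [hα j])
      (rpow_nonneg (one_sub_norm_sq_pos (mem_ball_zero_iff.1 (hz j trivial))).le _)
  rw [Pi.mul_apply, ENNReal.ofReal_prod_of_nonneg fun j _ ↦ hnonneg j, mul_comm]

theorem setLIntegral_polydisk_enorm_sq_comp_bergmanMeasure_le {α : ι → ℝ} (hα : ∀ j, -2 ≤ α j)
    {φ : ι → ℂ → ℂ} (hφ : ∀ j, DifferentiableOn ℂ (φ j) (ball 0 1))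
    (hmaps : ∀ j, MapsTo (φ j) (ball 0 1) (ball 0 1)) {h : (ι → ℂ) → ℂ}
    (hh : DifferentiableOn ℂ h (univ.pi fun _ ↦ ball 0 1)) :
    ∫⁻ z in univ.pi fun _ ↦ ball 0 1, ‖h fun j ↦ φ j (z j)‖ₑ ^ 2
        ∂Measure.pi (fun j ↦ bergmanMeasure (α j)) ≤
      (∏ j, ENNReal.ofReal (((1 + ‖φ j 0‖) / (1 - ‖φ j 0‖)) ^ (α j + 2))) *
        ∫⁻ z in univ.pi fun _ ↦ ball 0 1, ‖h z‖ₑ ^ 2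
          ∂Measure.pi (fun j ↦ bergmanMeasure (α j)) := by
  simpa only [Pi.pow_apply, enorm_pow] using lintegral_comp_pi_le (Φ := fun w : ℂ ↦ ‖w‖ₑ)
    continuous_enorm (fun _ ↦ isOpen_ball) hφ hmaps
    (fun j u hu ↦ setLIntegral_ball_enorm_comp_bergmanMeasure_le (hα j) hu (hφ j) (hmaps j))
    (hh.pow 2)

end Bergman

section RationalSelfMap

variable {a b z : ℂ}

lemma norm_add_mul_div_lt_one (ha : ‖a‖ < 1)
    (hab : ‖a * (b - ‖a‖ ^ 2 + 1)‖ + ‖b‖ ≤ 1 - ‖a‖ ^ 2) (hz : ‖z‖ < 1) :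
    ‖a + b * z / (1 - conj a * z)‖ < 1 := by
  have hna : ‖-a‖ < 1 := by rwa [norm_neg]
  obtain rfl | hb := eq_or_ne b 0
  · simpa using ha
  have hD := one_sub_conj_mul_ne_zero ha hz
  have hdecomp : (1 - ‖a‖ ^ 2 : ℂ) * (a + b * z / (1 - conj a * z)) =
      a * (b - ‖a‖ ^ 2 + 1) + b * diskShift (-a) z := by
    rw [diskShift, map_neg, neg_mul, ← sub_eq_add_neg, ← sub_eq_add_neg, ← conj_mul']
    field_simp
    ring
  refine lt_of_mul_lt_mul_left ?_ (one_sub_norm_sq_pos ha).le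
  calc (1 - ‖a‖ ^ 2) * ‖a + b * z / (1 - conj a * z)‖
    _ = ‖a * (b - ‖a‖ ^ 2 + 1) + b * diskShift (-a) z‖ := by
      rw [← hdecomp, norm_mul, norm_one_sub_norm_sq ha]
    _ ≤ ‖a * (b - ‖a‖ ^ 2 + 1)‖ + ‖b‖ * ‖diskShift (-a) z‖ := by
      rw [← norm_mul b]
      exact norm_add_le _ _
    _ < ‖a * (b - ‖a‖ ^ 2 + 1)‖ + ‖b‖ := by
      gcongr
      exact mul_lt_of_lt_one_right (norm_pos_iff.2 hb) (norm_diskShift_lt_one hna hz)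
    _ ≤ (1 - ‖a‖ ^ 2) * 1 := by rwa [mul_one]

lemma differentiableOn_add_mul_div (ha : ‖a‖ < 1) (b : ℂ) :
    DifferentiableOn ℂ (fun z ↦ a + b * z / (1 - conj a * z)) (ball 0 1) := by
  have hD : ∀ z ∈ ball 0 1, 1 - conj a * z ≠ 0 := fun _ hz ↦
    one_sub_conj_mul_ne_zero ha (mem_ball_zero_iff.1 hz)
  fun_prop (disch := assumption)

lemma norm_mul_prod_inv_pow_le {ι : Type*} [Fintype ι] {a z : ι → ℂ} (c : ℂ) (n : ι → ℕ)
    (ha : ∀ j, ‖a j‖ < 1) (hz : ∀ j, ‖z j‖ < 1) :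
    ‖c * ∏ j, ((1 - z j * conj (a j)) ^ n j)⁻¹‖ ≤ ‖c‖ * ∏ j, ((1 - ‖a j‖) ^ n j)⁻¹ := by
  rw [norm_mul, norm_prod]
  gcongr with j
  rw [norm_inv, norm_pow]
  have hpos : 0 < 1 - ‖a j‖ := sub_pos.2 (ha j)
  gcongr
  calc 1 - ‖a j‖
    _ ≤ 1 - ‖z j * conj (a j)‖ := by
      rw [norm_mul, RCLike.norm_conj]
      gcongr
      exact mul_le_of_le_one_left (norm_nonneg _) (hz j).le
    _ ≤ ‖1 - z j * conj (a j)‖ := by simpa using norm_sub_norm_le 1 (z j * conj (a j))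

end RationalSelfMap

lemma setOf_forall_norm_lt_one_eq_pi_ball {ι : Type*} :
    {z : ι → ℂ | ∀ j, ‖z j‖ < 1} = univ.pi fun _ ↦ ball 0 1 := by
  ext z
  simp

theorem exists_setLIntegral_polydisk_sq_norm_mul_comp_le {ι : Type*} [Fintype ι] {α : ι → ℝ}
    (hα : ∀ j, -1 ≤ α j) {f : (ι → ℂ) → ℂ} {M : ℝ} (hf : ∀ z, (∀ j, ‖z j‖ < 1) → ‖f z‖ ≤ M)
    {φ : ι → ℂ → ℂ} (hφ : ∀ j, DifferentiableOn ℂ (φ j) (ball 0 1))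
    (hmaps : ∀ j, MapsTo (φ j) (ball 0 1) (ball 0 1)) :
    ∃ R : ℝ, 0 < R ∧ ∀ h : (ι → ℂ) → ℂ, DifferentiableOn ℂ h {z | ∀ j, ‖z j‖ < 1} →
      ∫⁻ z in {z : ι → ℂ | ∀ j, ‖z j‖ < 1},
          ENNReal.ofReal (‖f z * h fun j ↦ φ j (z j)‖ ^ 2 *
            ∏ j, (1 + α j) * (1 - ‖z j‖ ^ 2) ^ α j) ∂(Measure.pi fun _ ↦ dA) ≤
        ENNReal.ofReal R * ∫⁻ z in {z : ι → ℂ | ∀ j, ‖z j‖ < 1},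
          ENNReal.ofReal (‖h z‖ ^ 2 * ∏ j, (1 + α j) * (1 - ‖z j‖ ^ 2) ^ α j)
            ∂(Measure.pi fun _ ↦ dA) := by
  have hofReal (w : ℂ) (t : ℝ) : ENNReal.ofReal (‖w‖ ^ 2 * t) = ‖w‖ₑ ^ 2 * ENNReal.ofReal t := by
    rw [ENNReal.ofReal_mul (by positivity), ENNReal.ofReal_pow (norm_nonneg w), ofReal_norm]
  have hK (j : ι) : 0 ≤ ((1 + ‖φ j 0‖) / (1 - ‖φ j 0‖)) ^ (α j + 2) := by
    have := sub_pos.2 (mem_ball_zero_iff.1 (hmaps j (mem_ball_self one_pos)))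
    positivity
  refine ⟨max 1 (M ^ 2 * ∏ j, ((1 + ‖φ j 0‖) / (1 - ‖φ j 0‖)) ^ (α j + 2)),
    lt_max_of_lt_left one_pos, fun h hh ↦ ?_⟩
  simp only [hofReal]
  rw [setOf_forall_norm_lt_one_eq_pi_ball] at hh ⊢
  rw [← setLIntegral_polydisk_bergmanMeasure hα, ← setLIntegral_polydisk_bergmanMeasure hα]
  calc ∫⁻ z in univ.pi fun _ ↦ ball 0 1, ‖f z * h fun j ↦ φ j (z j)‖ₑ ^ 2
        ∂Measure.pi (fun j ↦ bergmanMeasure (α j))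
    _ ≤ ∫⁻ z in univ.pi fun _ ↦ ball 0 1,
        ENNReal.ofReal (M ^ 2) * ‖h fun j ↦ φ j (z j)‖ₑ ^ 2
          ∂Measure.pi (fun j ↦ bergmanMeasure (α j)) := by
      refine setLIntegral_mono' (.univ_pi fun _ ↦ measurableSet_ball) fun z hz ↦ ?_
      rw [enorm_mul, mul_pow, ← ofReal_norm (f z), ← ENNReal.ofReal_pow (norm_nonneg _)]
      gcongr
      exact hf z fun j ↦ mem_ball_zero_iff.1 (hz j trivial)
    _ ≤ ENNReal.ofReal (M ^ 2) *
        ((∏ j, ENNReal.ofReal (((1 + ‖φ j 0‖) / (1 - ‖φ j 0‖)) ^ (α j + 2))) *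
          ∫⁻ z in univ.pi fun _ ↦ ball 0 1, ‖h z‖ₑ ^ 2
            ∂Measure.pi (fun j ↦ bergmanMeasure (α j))) := by
      rw [lintegral_const_mul' _ _ ENNReal.ofReal_ne_top]
      gcongr
      exact setLIntegral_polydisk_enorm_sq_comp_bergmanMeasure_le
        (fun j ↦ by linarith [hα j]) hφ hmaps hh
    _ ≤ _ := by
      rw [← mul_assoc, ← ENNReal.ofReal_prod_of_nonneg fun j _ ↦ hK j,
        ← ENNReal.ofReal_mul (sq_nonneg M)]
      gcongr
      exact le_max_right _ _

theorem stmt_13_general {ι : Type*} [Fintype ι] {α : ι → ℝ} (hα : ∀ j, -1 ≤ α j) (n : ι → ℕ)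
    (c : ℂ) {a b : ι → ℂ} (ha : ∀ j, ‖a j‖ < 1)
    (hab : ∀ j, ‖a j * (b j - ‖a j‖ ^ 2 + 1)‖ + ‖b j‖ ≤ 1 - ‖a j‖ ^ 2) :
    (∀ z : ι → ℂ, (∀ j, ‖z j‖ < 1) → ∀ j, ‖a j + b j * z j / (1 - conj (a j) * z j)‖ < 1) ∧
    ∃ R : ℝ, 0 < R ∧ ∀ h : (ι → ℂ) → ℂ, DifferentiableOn ℂ h {z | ∀ j, ‖z j‖ < 1} →
      ∫⁻ z in {z : ι → ℂ | ∀ j, ‖z j‖ < 1},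
          ENNReal.ofReal (‖c * (∏ j, ((1 - z j * conj (a j)) ^ n j)⁻¹) *
              h fun j ↦ a j + b j * z j / (1 - conj (a j) * z j)‖ ^ 2 *
            ∏ j, (1 + α j) * (1 - ‖z j‖ ^ 2) ^ α j) ∂(Measure.pi fun _ ↦ dA) ≤
        ENNReal.ofReal R * ∫⁻ z in {z : ι → ℂ | ∀ j, ‖z j‖ < 1},
          ENNReal.ofReal (‖h z‖ ^ 2 * ∏ j, (1 + α j) * (1 - ‖z j‖ ^ 2) ^ α j)
            ∂(Measure.pi fun _ ↦ dA) := by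
  have hmaps (j : ι) (z : ℂ) (hz : ‖z‖ < 1) : ‖a j + b j * z / (1 - conj (a j) * z)‖ < 1 :=
    norm_add_mul_div_lt_one (ha j) (hab j) hz
  exact ⟨fun z hz j ↦ hmaps j _ (hz j), exists_setLIntegral_polydisk_sq_norm_mul_comp_le hα
    (f := fun z ↦ c * ∏ j, ((1 - z j * conj (a j)) ^ n j)⁻¹)
    (φ := fun j z ↦ a j + b j * z / (1 - conj (a j) * z))
    (fun z hz ↦ norm_mul_prod_inv_pow_le c n ha hz)
    (fun j ↦ differentiableOn_add_mul_div (ha j) (b j))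
    (fun j z hz ↦ mem_ball_zero_iff.2 (hmaps j z (mem_ball_zero_iff.1 hz)))⟩

theorem stmt_13 (d : ℕ) (hd : 1 ≤ d) (ℓ : Fin d → ℕ)
    (c : ℝ) (a : Fin d → ℂ) (b : Fin d → ℝ)
    (ha : ∀ κ, ‖a κ‖ < 1)
    (hab : ∀ κ, ‖a κ * ((b κ : ℂ) - (‖a κ‖ : ℂ) ^ 2 + 1)‖ + |b κ| ≤ 1 - ‖a κ‖ ^ 2)
    (f : (Fin d → ℂ) → ℂ)
    (hf : ∀ z : Fin d → ℂ, f z = (c : ℂ) * ∏ j, ((1 - z j * conj (a j)) ^ (ℓ j + 2))⁻¹)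
    (g : (Fin d → ℂ) → Fin d → ℂ)
    (hg : ∀ z : Fin d → ℂ, ∀ κ, g z κ = a κ + (b κ : ℂ) * z κ / (1 - conj (a κ) * z κ)) :
    (∀ z ∈ {z : Fin d → ℂ | ∀ j, ‖z j‖ < 1}, ∀ κ, ‖g z κ‖ < 1) ∧
    ∃ R : ℝ, 0 < R ∧
      ∀ h : (Fin d → ℂ) → ℂ,
        AnalyticOnNhd ℂ h {z : Fin d → ℂ | ∀ j, ‖z j‖ < 1} →
        (∫⁻ z in {z : Fin d → ℂ | ∀ j, ‖z j‖ < 1},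
            ENNReal.ofReal (‖f z * h (g z)‖ ^ 2 *
              ∏ j, (1 + (ℓ j : ℝ)) * (1 - ‖z j‖ ^ 2) ^ ℓ j)
            ∂(Measure.pi fun _ => dA))
          ≤ ENNReal.ofReal R *
            ∫⁻ x in {x : Fin d → ℂ | ∀ j, ‖x j‖ < 1},
              ENNReal.ofReal (‖h x‖ ^ 2 * ∏ j, (1 + (ℓ j : ℝ)) * (1 - ‖x j‖ ^ 2) ^ ℓ j)
              ∂(Measure.pi fun _ => dA) := by
  obtain rfl : g = fun z κ ↦ a κ + b κ * z κ / (1 - conj (a κ) * z κ) := funext₂ hg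
  obtain ⟨hmaps, R, hR, hle⟩ := stmt_13_general (α := fun j ↦ ℓ j)
    (fun j ↦ neg_one_lt_zero.le.trans (ℓ j).cast_nonneg) (fun j ↦ ℓ j + 2) c (b := fun j ↦ b j) ha
    (by simpa only [norm_real, norm_eq_abs] using hab)
  simp only [← hf, rpow_natCast] at hle
  exact ⟨hmaps, R, hR, fun h hh ↦ hle h hh.differentiableOn⟩
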